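/- L² error bound: let n ≥ 2, let 0 < r₁ < … < r_n, set h := max_{1≤j≤n−1}(r_{j+1} − r_j), let f ∈ Λ₀, set α := f(0) and ν_j := f(r_j) for 1 ≤ j ≤ n, and let σ be either the interpolant σ^A (with σ(r_j) = ν_j for all j and σ(0) = α) or σ^B (non-singular, with σ(r_j) = ν_j for all j). Then for l ∈ {0,1}: ( ∫_{r₁}^{r_n} |f^{(l)}(r) − σ^{(l)}(r)|² dr )^{1/2} ≤ (1/(2^{1−l}·√r₁))·h^{2−l}·‖f‖₀. -/

import Mathlib

open MeasureTheory Set Filter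

noncomputable section

/-- The radial Beppo Levi energy space `Λ₀`: functions `f : (0,∞) → ℂ` of class `C¹`
whose derivative `f′` is locally absolutely continuous on compact subintervals of `(0,∞)`
(encoded by the fundamental theorem of calculus with an integrable density `f″`),
and whose radial Beppo Levi energy `∫₀^∞ ( r·|f″(r)|² + (1/r)·|f′(r)|² ) dr` is finite. -/
structure Lambda0 where
  f : ℝ → ℂ
  f' : ℝ → ℂ
  f'' : ℝ → ℂ
  hasDeriv : ∀ r ∈ Set.Ioi (0:ℝ), HasDerivAt f (f' r) r
  contDeriv : ContinuousOn f' (Set.Ioi 0)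
  locAC : ∀ a b : ℝ, 0 < a → a ≤ b →
    MeasureTheory.IntegrableOn f'' (Set.Icc a b) ∧
      ∀ x ∈ Set.Icc a b, f' x = f' a + ∫ t in a..x, f'' t
  energyFin : MeasureTheory.IntegrableOn
    (fun r : ℝ => r * ‖f'' r‖ ^ 2 + (1 / r) * ‖f' r‖ ^ 2) (Set.Ioi 0)

/-- The squared radial Beppo Levi energy `‖·‖₀²` of a function with first derivative `g'`
and second derivative `g''`. -/
def energySq (g' g'' : ℝ → ℂ) : ℝ :=
  ∫ r in Set.Ioi (0:ℝ), (r * ‖g'' r‖ ^ 2 + (1 / r) * ‖g' r‖ ^ 2)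

/-- The seminorm `‖f‖₀`. -/
def Lambda0.seminorm0 (F : Lambda0) : ℝ :=
  Real.sqrt (energySq F.f' F.f'')

/-- The semi-inner product `⟨f,g⟩₀`. -/
def innerBL (F G : Lambda0) : ℂ :=
  ∫ r in Set.Ioi (0:ℝ),
    ((r : ℂ) * F.f'' r * (starRingEnd ℂ) (G.f'' r) +
      (1 / (r : ℂ)) * F.f' r * (starRingEnd ℂ) (G.f' r))

/-- A Beppo Levi `L₀`-spline on the positive knots `r 1 < r 2 < … < r n`:
piecewise of the form `a·x² + b·x²·ln x + c + d·ln x` between consecutive knots,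
of the form `a·x² + b·x²·ln x + c` on `(0, r 1)`, of the form `c + d·ln x` on `(r n, ∞)`,
`C²` throughout `(0,∞)`, and continuously extended at `0`. -/
structure IsBLSpline (n : ℕ) (r : ℕ → ℝ) (η : ℝ → ℂ) : Prop where
  pieces : ∀ j : ℕ, 1 ≤ j → j + 1 ≤ n → ∃ a b c d : ℂ,
    ∀ x ∈ Set.Ioo (r j) (r (j + 1)),
      η x = a * (x : ℂ) ^ 2 + b * (x : ℂ) ^ 2 * (Real.log x : ℂ) + c + d * (Real.log x : ℂ)
  left : ∃ a b c : ℂ, ∀ x ∈ Set.Ioo (0 : ℝ) (r 1),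
      η x = a * (x : ℂ) ^ 2 + b * (x : ℂ) ^ 2 * (Real.log x : ℂ) + c
  right : ∃ c d : ℂ, ∀ x ∈ Set.Ioi (r n), η x = c + d * (Real.log x : ℂ)
  smooth : ContDiffOn ℝ 2 η (Set.Ioi 0)
  cont0 : ContinuousWithinAt η (Set.Ici 0) 0

/-- A Beppo Levi `L₀`-spline is non-singular if on `(0, r₁)` it has the form `a·x² + c`. -/
def NonSingularBLS (r1 : ℝ) (η : ℝ → ℂ) : Prop :=
  ∃ a c : ℂ, ∀ x ∈ Set.Ioo (0 : ℝ) r1, η x = a * (x : ℂ) ^ 2 + c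

/-- Rabut's kernel `K`. -/
def Kfun (r t : ℝ) : ℝ :=
  if r ≤ t then 0 else (1 / 4) * (t ^ 2 - r ^ 2 + (r ^ 2 + t ^ 2) * Real.log (r / t))

/-- The limiting kernel `H_{0,∞}` (with left endpoint knot `r1`). -/
def Hfun (r1 r t : ℝ) : ℝ :=
  Kfun r t - Kfun r r1 - Kfun r1 t + (1 / 4) * (r ^ 2 - r1 ^ 2) * Real.log (t / r1)

/-- The basis function `φ₀`. -/
def phi0 (r : ℝ) : ℝ :=
  if r ≤ 1 then r ^ 2 - r ^ 2 * Real.log r else 1 + Real.log r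

/-- Johnson's compactly supported profile `η₂`. -/
def eta2 (x : ℝ) : ℂ :=
  (((4 / 3 : ℝ) * (Real.log 2 - phi0 x + phi0 (x / 2)) : ℝ) : ℂ)

/-- The non-singular compactly supported profile `β`. -/
def betaFn (x : ℝ) : ℂ :=
  (((1 / 5 : ℝ) * (27 * Real.log 3 - 32 * Real.log 2 + 5 * phi0 x
      - 32 * phi0 (x / 2) + 27 * phi0 (x / 3)) : ℝ) : ℂ)

/-- `Ker L₀ = span{r², r² ln r, 1, ln r}`, as functions on `(0,∞)`. -/
def KerL0 : Set (ℝ → ℂ) :=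
  {η | ∃ a b c d : ℂ, ∀ x : ℝ, 0 < x →
    η x = a * (x : ℂ) ^ 2 + b * (x : ℂ) ^ 2 * (Real.log x : ℂ) + c + d * (Real.log x : ℂ)}

/-- `α(h) = inf_{η ∈ Ker L₀} sup_{t ∈ [0,1]} |t^μ − η(1+th)|`. -/
def alphaFn (μ h : ℝ) : ℝ :=
  sInf {v : ℝ | ∃ η ∈ KerL0,
    v = sSup ((fun t : ℝ => ‖((t ^ μ : ℝ) : ℂ) - η (1 + t * h)‖) '' Set.Icc (0 : ℝ) 1)}


lemma BL.ac {a b : ℝ} {k : ℝ → ℂ} (hk : Integrable k) :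
    AbsolutelyContinuousOnInterval (fun x => ∫ v in a..x, k v) a b := by
  have h1 : AbsolutelyContinuousOnInterval (fun x => ∫ v in a..x, (k v).re) a b :=
    (hk.re.intervalIntegrable).absolutelyContinuousOnInterval_intervalIntegral (by simp)
  have h2 : AbsolutelyContinuousOnInterval (fun x => ∫ v in a..x, (k v).im) a b :=
    (hk.im.intervalIntegrable).absolutelyContinuousOnInterval_intervalIntegral (by simp)
  have acc : ∀ c : ℂ, AbsolutelyContinuousOnInterval (fun _ : ℝ => c) a b := fun c =>
    (contDiffOn_const).absolutelyContinuousOnInterval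
  have h := (h1.smul (acc 1)).add (h2.smul (acc Complex.I))
  refine Eq.mp (congrArg (fun q => AbsolutelyContinuousOnInterval q a b) ?_) h
  funext x
  have e1 := intervalIntegral.intervalIntegral_re (𝕜 := ℂ) (hk.intervalIntegrable (a := a) (b := x))
  have e2 := intervalIntegral.intervalIntegral_im (𝕜 := ℂ) (hk.intervalIntegrable (a := a) (b := x))
  simp only [RCLike.re_to_complex, RCLike.im_to_complex] at e1 e2
  simp only [Pi.add_apply, Pi.smul_apply', e1, e2]
  apply Complex.ext <;> simp

lemma BL.ind {a b x : ℝ} (hx : x ∈ Icc a b) (q : ℝ → ℂ) :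
    ∫ t in a..x, (Icc a b).indicator q t = ∫ t in a..x, q t := by
  apply intervalIntegral.integral_congr
  intro t ht
  rw [uIcc_of_le hx.1] at ht
  have ht' : t ∈ Icc a b := ⟨ht.1, ht.2.trans hx.2⟩
  exact indicator_of_mem ht' q

lemma BL.ibp0 {a b : ℝ} (hab : a ≤ b) {u u' w k : ℝ → ℂ}
    (hu' : Integrable u') (hu : ∀ x ∈ Icc a b, u x = u a + ∫ t in a..x, u' t)
    (hk : Integrable k) (hw : ∀ x ∈ Icc a b, w x = w a + ∫ t in a..x, k t) :
    ∫ x in a..b, (u x * k x + u' x * w x) = u b * w b - u a * w a := by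
  have iu : IntervalIntegrable u' volume a b :=
    hu'.intervalIntegrable
  have ik : IntervalIntegrable k volume a b :=
    hk.intervalIntegrable
  set U : ℝ → ℂ := fun x => u a + ∫ t in a..x, u' t with hU
  set W : ℝ → ℂ := fun x => w a + ∫ t in a..x, k t with hW
  have acc : ∀ c : ℂ, AbsolutelyContinuousOnInterval (fun _ : ℝ => c) a b := fun c =>
    (contDiffOn_const).absolutelyContinuousOnInterval
  have aU : AbsolutelyContinuousOnInterval U a b :=
    (acc (u a)).add (BL.ac hu')
  have aW : AbsolutelyContinuousOnInterval W a b :=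
    (acc (w a)).add (BL.ac hk)
  have cU := aU.continuousOn
  have cW := aW.continuousOn
  have i1 : IntervalIntegrable (fun x => U x * k x + u' x * W x) volume a b :=
    (ik.continuousOn_mul cU).add (iu.mul_continuousOn cW)
  have i2 : IntegrableOn (fun x => U x * k x + u' x * W x) (Icc a b) :=
    (intervalIntegrable_iff_integrableOn_Icc_of_le hab).1 i1
  have ind : ∀ q : ℝ → ℂ, ∀ x ∈ Icc a b, ∫ t in a..x, (Icc a b).indicator q t = ∫ t in a..x, q t :=
    fun q x hx => BL.ind hx q
  set V := (Icc a b).indicator (fun x => U x * k x + u' x * W x) with hV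
  have i3 : Integrable V := i2.integrable_indicator measurableSet_Icc
  have aI := BL.ac (a := a) (b := b) i3
  have aT := (aU.smul aW).sub aI
  obtain ⟨C, hC⟩ := aT.const_of_ae_hasDerivAt_zero (by
    filter_upwards [iu.ae_hasDerivAt_integral, ik.ae_hasDerivAt_integral,
      (i3.intervalIntegrable (a := a) (b := b)).ae_hasDerivAt_integral] with x h1 h2 h3 hx
    have h1 := (h1 hx a (by simp)).const_add (u a)
    have h2 := (h2 hx a (by simp)).const_add (w a)
    have h3 := h3 hx a (by simp)
    have := (h1.mul h2).sub h3
    have hz : u' x * (w a + ∫ t in a..x, k t) + (u a + ∫ t in a..x, u' t) * k x - V x = 0 := by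
      rw [hV, indicator_of_mem (by rwa [← uIcc_of_le hab])]
      simp only [hU, hW]
      ring
    rw [hz] at this
    exact this)
  have e1 := hC a (by simp)
  have e2 := hC b (by simp)
  rw [← e2] at e1
  have : ∫ x in a..b, (u x * k x + u' x * w x) = ∫ x in a..b, (U x * k x + u' x * W x) := by
    apply intervalIntegral.integral_congr
    intro x hx
    rw [uIcc_of_le hab] at hx
    simp only [hU, hW]
    rw [← hu x hx, ← hw x hx]
  rw [this, ← ind _ b (by simp [hab]), ← hV]
  change U a * W a - (∫ v in a..a, V v) = U b * W b - (∫ v in a..b, V v) at e1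
  have ha1 : U a = u a := by simp [hU]
  have ha2 : W a = w a := by simp [hW]
  have hb1 : U b = u b := (hu b (by simp [hab])).symm
  have hb2 : W b = w b := (hw b (by simp [hab])).symm
  rw [intervalIntegral.integral_same, ha1, ha2, hb1, hb2] at e1
  linear_combination e1


lemma BL.ibp {a b : ℝ} (hab : a ≤ b) {u u' w k : ℝ → ℂ}
    (hu' : IntegrableOn u' (Icc a b)) (hu : ∀ x ∈ Icc a b, u x = u a + ∫ t in a..x, u' t)
    (hk : IntegrableOn k (Icc a b)) (hw : ∀ x ∈ Icc a b, w x = w a + ∫ t in a..x, k t) :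
    ∫ x in a..b, (u x * k x + u' x * w x) = u b * w b - u a * w a := by
  have h := BL.ibp0 hab (u := u) (w := w) (hu'.integrable_indicator measurableSet_Icc)
    (fun x hx => by rw [BL.ind hx]; exact hu x hx)
    (hk.integrable_indicator measurableSet_Icc)
    (fun x hx => by rw [BL.ind hx]; exact hw x hx)
  rw [← h]
  apply intervalIntegral.integral_congr
  intro t ht
  rw [uIcc_of_le hab] at ht
  simp only [indicator_of_mem ht]

lemma BL.ae_eq {a b : ℝ} (hab : a ≤ b) {w w' k : ℝ → ℂ}
    (hk : IntegrableOn k (Icc a b)) (hw : ∀ x ∈ Icc a b, w x = w a + ∫ t in a..x, k t)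
    (hd : ∀ x ∈ Ioo a b, HasDerivAt w (w' x) x) :
    ∀ᵐ x, x ∈ Ioo a b → k x = w' x := by
  have ik : IntervalIntegrable k volume a b :=
    (intervalIntegrable_iff_integrableOn_Icc_of_le hab).2 hk
  filter_upwards [ik.ae_hasDerivAt_integral] with x h2 hx
  have h2 := (h2 (by rw [uIcc_of_le hab]; exact Ioo_subset_Icc_self hx) a (by simp)).const_add (w a)
  refine h2.unique ((hd x hx).congr_of_eventuallyEq ?_)
  filter_upwards [Ioo_mem_nhds hx.1 hx.2] with y hy
  exact (hw y (Ioo_subset_Icc_self hy)).symm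

lemma BL.locInt (F : Lambda0) : AEStronglyMeasurable F.f'' (volume.restrict (Ioi 0)) := by
  have : LocallyIntegrableOn F.f'' (Ioi 0) := by
    intro x hx
    have hx : 0 < x := hx
    refine ⟨Icc (x/2) (2*x), mem_nhdsWithin_of_mem_nhds (Icc_mem_nhds (by linarith) (by linarith)), ?_⟩
    exact (F.locAC _ _ (by linarith) (by linarith)).1
  exact this.aestronglyMeasurable

lemma BL.meas' (F : Lambda0) : AEStronglyMeasurable F.f' (volume.restrict (Ioi 0)) :=
  F.contDeriv.aestronglyMeasurable measurableSet_Ioi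

lemma BL.ii (F : Lambda0) {a b : ℝ} (ha : 0 < a) (hab : a ≤ b) :
    IntervalIntegrable F.f'' volume a b :=
  (intervalIntegrable_iff_integrableOn_Icc_of_le hab).2 (F.locAC a b ha hab).1

lemma BL.sub_eq (F : Lambda0) {a b : ℝ} (ha : 0 < a) (hab : a ≤ b) :
    F.f' b - F.f' a = ∫ t in a..b, F.f'' t := by
  rw [(F.locAC a b ha hab).2 b (by simp [hab])]; ring

lemma BL.sub_eq0 (F : Lambda0) {a b : ℝ} (ha : 0 < a) (hab : a ≤ b) :
    F.f b - F.f a = ∫ t in a..b, F.f' t := by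
  rw [intervalIntegral.integral_eq_sub_of_hasDerivAt]
  · intro x hx
    rw [uIcc_of_le hab] at hx
    exact F.hasDeriv x (lt_of_lt_of_le ha hx.1)
  · apply ContinuousOn.intervalIntegrable
    rw [uIcc_of_le hab]
    exact F.contDeriv.mono (fun x hx => lt_of_lt_of_le ha hx.1)

def BL.E (F : Lambda0) (r : ℝ) : ℝ := r * ‖F.f'' r‖ ^ 2 + (1 / r) * ‖F.f' r‖ ^ 2

lemma BL.E_nonneg (F : Lambda0) {r : ℝ} (hr : 0 < r) : 0 ≤ BL.E F r := by
  unfold BL.E; positivity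

lemma BL.E_meas {u v : ℝ → ℂ} (hu : AEStronglyMeasurable u (volume.restrict (Ioi 0)))
    (hv : AEStronglyMeasurable v (volume.restrict (Ioi 0))) :
    AEStronglyMeasurable (fun r : ℝ => r * ‖v r‖ ^ 2 + (1 / r) * ‖u r‖ ^ 2)
      (volume.restrict (Ioi 0)) := by
  have m : Measurable (fun r : ℝ => 1 / r) := by fun_prop
  exact (aestronglyMeasurable_id.mul (hv.norm.pow 2)).add
    (m.aestronglyMeasurable.mul (hu.norm.pow 2))

lemma BL.sq_sub_le (u v : ℂ) : ‖u - v‖ ^ 2 ≤ 2 * ‖u‖ ^ 2 + 2 * ‖v‖ ^ 2 := by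
  have := norm_sub_le u v
  nlinarith [norm_nonneg u, norm_nonneg v, norm_nonneg (u - v), sq_nonneg (‖u‖ - ‖v‖)]

def BL.sub (F S : Lambda0) : Lambda0 where
  f := fun x => F.f x - S.f x
  f' := fun x => F.f' x - S.f' x
  f'' := fun x => F.f'' x - S.f'' x
  hasDeriv := fun r hr => (F.hasDeriv r hr).sub (S.hasDeriv r hr)
  contDeriv := F.contDeriv.sub S.contDeriv
  locAC := by
    intro a b ha hab
    refine ⟨(F.locAC a b ha hab).1.sub (S.locAC a b ha hab).1, ?_⟩
    intro x hx
    rw [intervalIntegral.integral_sub (BL.ii F ha hx.1) (BL.ii S ha hx.1),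
      (F.locAC a b ha hab).2 x hx, (S.locAC a b ha hab).2 x hx]
    ring
  energyFin := by
    have hd := (F.energyFin.const_mul 2).add (S.energyFin.const_mul 2)
    refine hd.mono' (BL.E_meas ((BL.meas' F).sub (BL.meas' S)) ((BL.locInt F).sub (BL.locInt S))) ?_
    filter_upwards [ae_restrict_mem measurableSet_Ioi] with x hx
    have hx : 0 < x := hx
    have hx' : 0 < 1 / x := by positivity
    rw [Real.norm_of_nonneg (by positivity)]
    simp only [Pi.add_apply]
    have h1 := mul_le_mul_of_nonneg_left (BL.sq_sub_le (F.f'' x) (S.f'' x)) hx.le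
    have h2 := mul_le_mul_of_nonneg_left (BL.sq_sub_le (F.f' x) (S.f' x)) hx'.le
    linarith

def BL.I (G S : Lambda0) (r : ℝ) : ℂ :=
  (r : ℂ) * G.f'' r * (starRingEnd ℂ) (S.f'' r) +
      (1 / (r : ℂ)) * G.f' r * (starRingEnd ℂ) (S.f' r)

lemma BL.I_int (G S : Lambda0) : IntegrableOn (BL.I G S) (Ioi 0) := by
  have hd := G.energyFin.add S.energyFin
  refine hd.mono' ?_ ?_
  · have m1 : Measurable (fun r : ℝ => (r : ℂ)) := by fun_prop
    have m2 : Measurable (fun r : ℝ => 1 / (r : ℂ)) := by fun_prop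
    exact ((m1.aestronglyMeasurable.mul (BL.locInt G)).mul
      (Complex.continuous_conj.comp_aestronglyMeasurable (BL.locInt S))).add
      ((m2.aestronglyMeasurable.mul (BL.meas' G)).mul
      (Complex.continuous_conj.comp_aestronglyMeasurable (BL.meas' S)))
  · filter_upwards [ae_restrict_mem measurableSet_Ioi] with x hx
    have hx : 0 < x := hx
    have hx' : 0 < 1 / x := by positivity
    unfold BL.I
    refine (norm_add_le _ _).trans ?_
    simp only [norm_mul, norm_div, norm_one, Complex.norm_real, Real.norm_of_nonneg hx.le,
      RCLike.norm_conj, Pi.add_apply]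
    have key : ∀ p q : ℝ, p * q ≤ p ^ 2 + q ^ 2 := fun p q => by
      nlinarith [sq_nonneg (p - q), sq_nonneg p, sq_nonneg q]
    have h1 := mul_le_mul_of_nonneg_left (key ‖G.f'' x‖ ‖S.f'' x‖) hx.le
    have h2 := mul_le_mul_of_nonneg_left (key ‖G.f' x‖ ‖S.f' x‖) hx'.le
    linarith

lemma BL.sq_add (u v : ℂ) : ‖u‖ ^ 2 = ‖u - v‖ ^ 2 + ‖v‖ ^ 2
    + 2 * ((u - v) * (starRingEnd ℂ) v).re := by
  simp only [← Complex.normSq_eq_norm_sq, Complex.normSq_apply, Complex.sub_re, Complex.sub_im,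
    Complex.mul_re, Complex.conj_re, Complex.conj_im]
  ring

lemma BL.energy_le (F S : Lambda0) (h0 : ∫ x in Ioi (0 : ℝ), BL.I (BL.sub F S) S x = 0) :
    energySq (BL.sub F S).f' (BL.sub F S).f'' ≤ energySq F.f' F.f'' := by
  have hI := BL.I_int (BL.sub F S) S
  have hre : ∫ x in Ioi (0 : ℝ), (BL.I (BL.sub F S) S x).re = 0 := by
    have := integral_re (𝕜 := ℂ) hI
    simp only [RCLike.re_to_complex] at this
    rw [this, h0]; simp
  have hIr : IntegrableOn (fun x => 2 * (BL.I (BL.sub F S) S x).re) (Ioi 0) := (hI.re).const_mul 2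
  have hg := (BL.sub F S).energyFin
  have hs := S.energyFin
  have e : energySq F.f' F.f'' = ∫ x in Ioi (0 : ℝ), (BL.E (BL.sub F S) x + BL.E S x
      + 2 * (BL.I (BL.sub F S) S x).re) := by
    unfold energySq
    apply setIntegral_congr_fun measurableSet_Ioi
    intro x hx
    have hx : 0 < x := hx
    have e1 := BL.sq_add (F.f'' x) (S.f'' x)
    have e2 := BL.sq_add (F.f' x) (S.f' x)
    simp only [BL.E, BL.I, BL.sub]
    rw [e1, e2, Complex.add_re]
    have : (1 / (x : ℂ)) = ((1 / x : ℝ) : ℂ) := by push_cast; rfl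
    rw [this, mul_assoc, mul_assoc, Complex.re_ofReal_mul, Complex.re_ofReal_mul]
    ring
  have e3 : ∫ x in Ioi (0 : ℝ), (BL.E (BL.sub F S) x + BL.E S x
      + 2 * (BL.I (BL.sub F S) S x).re) = (∫ x in Ioi (0 : ℝ), BL.E (BL.sub F S) x) +
      (∫ x in Ioi (0 : ℝ), BL.E S x) + 2 * ∫ x in Ioi (0 : ℝ), (BL.I (BL.sub F S) S x).re := by
    rw [← integral_const_mul, ← integral_add (f := fun x => BL.E (BL.sub F S) x) (g := fun x => BL.E S x) hg hs,
      ← integral_add (f := fun x => BL.E (BL.sub F S) x + BL.E S x) (hg.add hs) hIr]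
  have hsn : 0 ≤ ∫ x in Ioi (0 : ℝ), BL.E S x :=
    setIntegral_nonneg measurableSet_Ioi fun x hx => BL.E_nonneg S hx
  rw [e, e3, hre]
  change (∫ x in Ioi (0 : ℝ), BL.E (BL.sub F S) x) ≤ _
  linarith

lemma BL.hlog {x : ℝ} (hx : 0 < x) :
    HasDerivAt (fun x : ℝ => ((Real.log x : ℝ) : ℂ)) (1 / (x : ℂ)) x := by
  have := (Real.hasDerivAt_log hx.ne').ofReal_comp
  convert this using 1
  push_cast; simp

lemma BL.hid (x : ℝ) : HasDerivAt (fun x : ℝ => (x : ℂ)) 1 x := by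
  simpa using (hasDerivAt_id x).ofReal_comp

lemma BL.p0 (a b c d : ℂ) {x : ℝ} (hx : 0 < x) :
    HasDerivAt (fun x : ℝ => a * (x : ℂ) ^ 2 + b * (x : ℂ) ^ 2 * (Real.log x : ℂ) + c
      + d * (Real.log x : ℂ))
      (2 * a * x + b * (2 * x * (Real.log x : ℂ) + x) + d / x) x := by
  have hx' : (x : ℂ) ≠ 0 := by exact_mod_cast hx.ne'
  have h := ((((BL.hid x).pow 2).const_mul a).add
    ((((BL.hid x).pow 2).const_mul b).mul (BL.hlog hx))).add_const c |>.add
    ((BL.hlog hx).const_mul d)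
  convert! h using 1
  simp only [Pi.pow_apply]
  field_simp
  ring

lemma BL.p1 (a b d : ℂ) {x : ℝ} (hx : 0 < x) :
    HasDerivAt (fun x : ℝ => 2 * a * (x : ℂ) + b * (2 * x * (Real.log x : ℂ) + x) + d / x)
      (2 * a + b * (2 * (Real.log x : ℂ) + 3) - d / (x : ℂ) ^ 2) x := by
  have hx' : (x : ℂ) ≠ 0 := by exact_mod_cast hx.ne'
  have h := (((BL.hid x).const_mul (2 * a)).add
    (((((BL.hid x).const_mul 2).mul (BL.hlog hx)).add (BL.hid x)).const_mul b)).add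
    ((hasDerivAt_const x d).div (BL.hid x) hx')
  convert! h using 1
  field_simp
  ring

lemma BL.p2 (a b d : ℂ) {x : ℝ} (hx : 0 < x) :
    HasDerivAt (fun x : ℝ => (x : ℂ) * (2 * a + b * (2 * (Real.log x : ℂ) + 3) - d / (x : ℂ) ^ 2))
      (2 * a + b * (2 * (Real.log x : ℂ) + 5) + d / (x : ℂ) ^ 2) x := by
  have hx' : (x : ℂ) ≠ 0 := by exact_mod_cast hx.ne'
  have h := (BL.hid x).mul (((((((BL.hlog hx).const_mul 2).add_const 3)).const_mul b).const_add
    (2 * a)).sub ((hasDerivAt_const x d).div ((BL.hid x).pow 2) (pow_ne_zero 2 hx')))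
  convert! h using 1
  simp only [Pi.pow_apply, Pi.sub_apply, Pi.div_apply]
  field_simp
  ring

/-- derivative formulas on a piece -/
lemma BL.piece_formula (S : Lambda0) (T : ℝ → ℂ)
    (hT : ∀ x, 0 < x → HasDerivAt S.f' (T x) x) {s t : ℝ} (hs : 0 ≤ s) (a b c d : ℂ)
    (hf : ∀ x ∈ Ioo s t, S.f x = a * (x : ℂ) ^ 2 + b * (x : ℂ) ^ 2 * (Real.log x : ℂ) + c
      + d * (Real.log x : ℂ)) :
    ∀ x ∈ Ioo s t, S.f' x = 2 * a * x + b * (2 * x * (Real.log x : ℂ) + x) + d / x ∧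
      T x = 2 * a + b * (2 * (Real.log x : ℂ) + 3) - d / (x : ℂ) ^ 2 := by
  have h1 : ∀ x ∈ Ioo s t, S.f' x = 2 * a * x + b * (2 * x * (Real.log x : ℂ) + x) + d / x := by
    intro x hx
    have hx0 : 0 < x := lt_of_le_of_lt hs hx.1
    refine (S.hasDeriv x hx0).unique ((BL.p0 a b c d hx0).congr_of_eventuallyEq ?_)
    filter_upwards [Ioo_mem_nhds hx.1 hx.2] with y hy using hf y hy
  intro x hx
  have hx0 : 0 < x := lt_of_le_of_lt hs hx.1
  refine ⟨h1 x hx, ?_⟩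
  refine (hT x hx0).unique ((BL.p1 a b d hx0).congr_of_eventuallyEq ?_)
  filter_upwards [Ioo_mem_nhds hx.1 hx.2] with y hy using h1 y hy

lemma BL.conj_cont_q (a b d : ℂ) {s t : ℝ} (hs : 0 < s) :
    ContinuousOn (fun x : ℝ => 2 * a + b * (2 * (Real.log x : ℂ) + 3) - d / (x : ℂ) ^ 2)
      (Icc s t) := by
  intro x hx
  have hx0 : 0 < x := lt_of_lt_of_le hs hx.1
  have hx' : (x : ℂ) ≠ 0 := by exact_mod_cast hx0.ne'
  have := (BL.hlog hx0).continuousAt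
  have h2 := (BL.hid x).continuousAt
  exact ((continuousAt_const.add (continuousAt_const.mul ((continuousAt_const.mul this).add
    continuousAt_const))).sub (continuousAt_const.div (h2.pow 2)
      (pow_ne_zero 2 hx'))).continuousWithinAt

lemma BL.piece (G S : Lambda0) (T : ℝ → ℂ)
    (hT : ∀ x, 0 < x → HasDerivAt S.f' (T x) x) (hTc : ContinuousOn T (Ioi 0))
    {s t : ℝ} (hs : 0 < s) (hst : s < t) (a b c d : ℂ)
    (hf : ∀ x ∈ Ioo s t, S.f x = a * (x : ℂ) ^ 2 + b * (x : ℂ) ^ 2 * (Real.log x : ℂ) + c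
      + d * (Real.log x : ℂ)) :
    ∫ x in s..t, BL.I G S x = t * (starRingEnd ℂ) (T t) * G.f' t
      - s * (starRingEnd ℂ) (T s) * G.f' s - 4 * (starRingEnd ℂ) b * (G.f t - G.f s) := by
  set σ := starRingEnd ℂ with hσ
  have hp := BL.piece_formula S T hT hs.le a b c d hf
  have hq : EqOn T (fun x : ℝ => 2 * a + b * (2 * (Real.log x : ℂ) + 3) - d / (x : ℂ) ^ 2)
      (Icc s t) := by
    have h : EqOn T (fun x : ℝ => 2 * a + b * (2 * (Real.log x : ℂ) + 3) - d / (x : ℂ) ^ 2)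
      (Ioo s t) := fun x hx => (hp x hx).2
    exact h.of_subset_closure (hTc.mono fun x hx => lt_of_lt_of_le hs hx.1)
      (BL.conj_cont_q a b d hs) Ioo_subset_Icc_self (by rw [closure_Ioo hst.ne])
  set U : ℝ → ℂ := fun x => (x : ℂ) * (2 * σ a + σ b * (2 * (Real.log x : ℂ) + 3)
    - σ d / (x : ℂ) ^ 2) with hU
  set U' : ℝ → ℂ := fun x => 2 * σ a + σ b * (2 * (Real.log x : ℂ) + 5)
    + σ d / (x : ℂ) ^ 2 with hU'
  have hUT : ∀ x ∈ Icc s t, U x = x * σ (T x) := by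
    intro x hx
    rw [hq hx]
    simp only [hU, hσ, map_sub, map_add, map_mul, map_div₀, map_pow, Complex.conj_ofReal, map_ofNat]
  have hUd : ∀ x, 0 < x → HasDerivAt U (U' x) x := fun x hx => BL.p2 _ _ _ hx
  have hU'c : ContinuousOn U' (Icc s t) := by
    have := (BL.conj_cont_q (σ a + σ b) (σ b) (- σ d) (t := t) hs)
    refine this.congr fun x hx => ?_
    simp only [hU']
    ring
  have hac := G.locAC s t hs hst.le
  have h := BL.ibp hst.le (u := U) (u' := U') (w := G.f') (k := G.f'') hU'c.integrableOn_Icc ?_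
    hac.1 hac.2
  swap
  · intro x hx
    rw [intervalIntegral.integral_eq_sub_of_hasDerivAt (f := U)]
    · ring
    · intro y hy
      rw [uIcc_of_le hx.1] at hy
      exact hUd y (lt_of_lt_of_le hs hy.1)
    · apply ContinuousOn.intervalIntegrable
      rw [uIcc_of_le hx.1]
      exact hU'c.mono (Icc_subset_Icc_right hx.2)
  rw [← hUT t (by simp [hst.le]), ← hUT s (by simp [hst.le]), ← h, BL.sub_eq0 G hs hst.le,
    ← intervalIntegral.integral_const_mul, ← intervalIntegral.integral_sub]
  · apply intervalIntegral.integral_congr_ae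
    have hae := BL.ae_eq hst.le (w' := T) (S.locAC s t hs hst.le).1 (S.locAC s t hs hst.le).2
      (fun x hx => hT x (hs.trans hx.1))
    have hne : ∀ᵐ x : ℝ, x ≠ t := by simp [ae_iff, measure_singleton]
    filter_upwards [hae, hne] with x hx hxt hx2
    rw [uIoc_of_le hst.le] at hx2
    have hxo : x ∈ Ioo s t := ⟨hx2.1, lt_of_le_of_ne hx2.2 hxt⟩
    have hx0 : 0 < x := hs.trans hxo.1
    have hx' : (x : ℂ) ≠ 0 := by exact_mod_cast hx0.ne'
    have e := hUT x (Ioo_subset_Icc_self hxo)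
    unfold BL.I
    rw [hx hxo, (hp x hxo).1, e]
    simp only [hU', ← hσ, map_add, map_mul, map_div₀]
    simp only [hσ, Complex.conj_ofReal, map_ofNat]
    field_simp
    ring
  · have i1 := BL.ii G hs hst.le
    have c1 : ContinuousOn U (uIcc s t) := by
      rw [uIcc_of_le hst.le]
      exact fun x hx => (hUd x (lt_of_lt_of_le hs hx.1)).continuousAt.continuousWithinAt
    have c2 : ContinuousOn (fun x => U' x * G.f' x) (uIcc s t) := by
      rw [uIcc_of_le hst.le]
      exact hU'c.mul (G.contDeriv.mono fun x hx => lt_of_lt_of_le hs hx.1)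
    exact (i1.continuousOn_mul c1).add c2.intervalIntegrable
  · apply ContinuousOn.intervalIntegrable
    rw [uIcc_of_le hst.le]
    exact continuousOn_const.mul (G.contDeriv.mono fun x hx => lt_of_lt_of_le hs hx.1)

lemma BL.Eii (G : Lambda0) {s t : ℝ} (hs : 0 < s) (hst : s ≤ t) :
    IntervalIntegrable (BL.E G) volume s t := by
  rw [intervalIntegrable_iff_integrableOn_Ioc_of_le hst]
  exact IntegrableOn.mono_set (f := BL.E G) G.energyFin fun x hx => hs.trans hx.1

lemma BL.Eint_le (G : Lambda0) {s t : ℝ} (hs : 0 < s) (hst : s ≤ t) :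
    ∫ x in s..t, BL.E G x ≤ energySq G.f' G.f'' := by
  rw [intervalIntegral.integral_of_le hst]
  refine setIntegral_mono_set (f := BL.E G) G.energyFin ?_ ?_
  · filter_upwards [ae_restrict_mem measurableSet_Ioi] with x hx using BL.E_nonneg G hx
  · exact Eventually.of_forall fun x hx => hs.trans hx.1

lemma BL.growth0 (G : Lambda0) {s t : ℝ} (hs : 0 < s) (hst : s ≤ t) :
    ‖G.f' t - G.f' s‖ ≤ energySq G.f' G.f'' + (Real.log t - Real.log s) := by
  rw [BL.sub_eq G hs hst]
  have hinv : IntervalIntegrable (fun x : ℝ => 1 / x) volume s t := by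
    apply ContinuousOn.intervalIntegrable
    rw [uIcc_of_le hst]
    exact fun x hx => (continuousAt_const.div continuousAt_id
      (lt_of_lt_of_le hs hx.1).ne').continuousWithinAt
  have e : ∫ x in s..t, 1 / x = Real.log t - Real.log s := by
    rw [integral_one_div_of_pos hs (hs.trans_le hst), Real.log_div (hs.trans_le hst).ne' hs.ne']
  calc ‖∫ x in s..t, G.f'' x‖ ≤ ∫ x in s..t, ‖G.f'' x‖ :=
        intervalIntegral.norm_integral_le_integral_norm hst
    _ ≤ ∫ x in s..t, (BL.E G x + 1 / x) := by
        apply intervalIntegral.integral_mono_on hst (BL.ii G hs hst).norm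
          ((BL.Eii G hs hst).add hinv)
        intro x hx
        have hx0 : 0 < x := lt_of_lt_of_le hs hx.1
        unfold BL.E
        have : ‖G.f'' x‖ ≤ x * ‖G.f'' x‖ ^ 2 + 1 / x := by
          have h := mul_nonneg hx0.le (sq_nonneg (‖G.f'' x‖ - 1 / x))
          have h2 : x * (‖G.f'' x‖ - 1 / x) ^ 2 = x * ‖G.f'' x‖ ^ 2 - 2 * ‖G.f'' x‖ + 1 / x := by
            field_simp
            ring
          have := norm_nonneg (G.f'' x)
          linarith
        have : 0 ≤ 1 / x * ‖G.f' x‖ ^ 2 := by positivity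
        linarith
    _ = (∫ x in s..t, BL.E G x) + (Real.log t - Real.log s) := by
        rw [intervalIntegral.integral_add (BL.Eii G hs hst) hinv, e]
    _ ≤ _ := by linarith [BL.Eint_le G hs hst]

lemma BL.growth (G : Lambda0) : ∃ C, 0 ≤ C ∧ ∀ x, 0 < x → ‖G.f' x‖ ≤ C + |Real.log x| := by
  have hE : 0 ≤ energySq G.f' G.f'' :=
    setIntegral_nonneg measurableSet_Ioi fun x hx => BL.E_nonneg G hx
  refine ⟨‖G.f' 1‖ + energySq G.f' G.f'', by positivity, fun x hx => ?_⟩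
  rcases le_total 1 x with h | h
  · have h1 := BL.growth0 G one_pos h
    have h2 := norm_sub_norm_le (G.f' x) (G.f' 1)
    rw [Real.log_one] at h1
    linarith [le_abs_self (Real.log x)]
  · have h1 := BL.growth0 G hx h
    have h2 := norm_sub_norm_le (G.f' x) (G.f' 1)
    rw [norm_sub_rev] at h2
    rw [Real.log_one] at h1
    linarith [neg_le_abs (Real.log x)]

lemma BL.lim_left (G : Lambda0) (T : ℝ → ℂ) {ρ : ℝ} (hρ : 0 < ρ) (a b : ℂ)
    (hT : ∀ x ∈ Ioo 0 ρ, T x = 2 * a + b * (2 * (Real.log x : ℂ) + 3)) :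
    Tendsto (fun x : ℝ => (x : ℂ) * (starRingEnd ℂ) (T x) * G.f' x) (nhdsWithin 0 (Ioi 0))
      (nhds 0) := by
  obtain ⟨C, hC0, hC⟩ := BL.growth G
  have t0 : Tendsto (fun x : ℝ => x) (nhdsWithin 0 (Ioi 0)) (nhds 0) :=
    tendsto_id.mono_left nhdsWithin_le_nhds
  have t1 : Tendsto (fun x : ℝ => x ^ (1 / 2 : ℝ)) (nhdsWithin 0 (Ioi 0)) (nhds 0) := by
    have : ContinuousAt (fun x : ℝ => x ^ (1 / 2 : ℝ)) 0 :=
      Real.continuousAt_rpow_const _ _ (Or.inr (by norm_num))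
    have h := this.tendsto.mono_left (nhdsWithin_le_nhds (s := Ioi 0))
    simpa using h
  have t2 : Tendsto (fun x : ℝ => Real.log x * x ^ (1 / 2 : ℝ)) (nhdsWithin 0 (Ioi 0)) (nhds 0) :=
    tendsto_log_mul_rpow_nhdsGT_zero (by norm_num)
  have t3 := t2.abs
  rw [abs_zero] at t3
  have t4 : Tendsto (fun x : ℝ => ((2 * ‖a‖ + 3 * ‖b‖) * x ^ (1 / 2 : ℝ)
      + 2 * ‖b‖ * |Real.log x * x ^ (1 / 2 : ℝ)|) *
      (C * x ^ (1 / 2 : ℝ) + |Real.log x * x ^ (1 / 2 : ℝ)|)) (nhdsWithin 0 (Ioi 0)) (nhds 0) := by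
    have := ((t1.const_mul (2 * ‖a‖ + 3 * ‖b‖)).add (t3.const_mul (2 * ‖b‖))).mul
      ((t1.const_mul C).add t3)
    simpa using this
  refine squeeze_zero_norm' ?_ t4
  filter_upwards [Ioo_mem_nhdsGT hρ] with x hx
  rw [norm_mul, norm_mul, RCLike.norm_conj, Complex.norm_real, Real.norm_of_nonneg hx.1.le, hT x hx]
  have hT' : ‖2 * a + b * (2 * (Real.log x : ℂ) + 3)‖ ≤ (2 * ‖a‖ + 3 * ‖b‖)
      + 2 * ‖b‖ * |Real.log x| := by
    calc _ ≤ ‖2 * a‖ + ‖b * (2 * (Real.log x : ℂ) + 3)‖ := norm_add_le _ _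
      _ ≤ 2 * ‖a‖ + ‖b‖ * (2 * |Real.log x| + 3) := by
          rw [norm_mul, norm_mul]
          have : ‖2 * (Real.log x : ℂ) + 3‖ ≤ 2 * |Real.log x| + 3 := by
            refine (norm_add_le _ _).trans ?_
            simp
          have := mul_le_mul_of_nonneg_left this (norm_nonneg b)
          simp only [Complex.norm_ofNat]
          linarith
      _ = _ := by ring
  have hx2 : x ^ (1 / 2 : ℝ) * x ^ (1 / 2 : ℝ) = x := by
    rw [← Real.rpow_add hx.1]; norm_num
  have hp : 0 ≤ x ^ (1 / 2 : ℝ) := Real.rpow_nonneg hx.1.le _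
  rw [abs_mul, abs_of_nonneg hp]
  set y := x ^ (1 / 2 : ℝ)
  calc x * ‖2 * a + b * (2 * (Real.log x : ℂ) + 3)‖ * ‖G.f' x‖
      ≤ x * ((2 * ‖a‖ + 3 * ‖b‖) + 2 * ‖b‖ * |Real.log x|) * (C + |Real.log x|) := by
        gcongr
        · exact mul_nonneg hx.1.le (by positivity)
        · exact hx.1.le
        · exact hC x hx.1
    _ = _ := by rw [← hx2]; ring

lemma BL.lim_right (G : Lambda0) (T : ℝ → ℂ) {ρ : ℝ} (hρ : 0 < ρ) (d : ℂ)
    (hT : ∀ x ∈ Ioi ρ, T x = - d / (x : ℂ) ^ 2) :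
    Tendsto (fun x : ℝ => (x : ℂ) * (starRingEnd ℂ) (T x) * G.f' x) atTop (nhds 0) := by
  obtain ⟨C, hC0, hC⟩ := BL.growth G
  have t1 : Tendsto (fun x : ℝ => x⁻¹) atTop (nhds 0) := tendsto_inv_atTop_zero
  have t2 : Tendsto (fun x : ℝ => Real.log x / x) atTop (nhds 0) :=
    Real.isLittleO_log_id_atTop.tendsto_div_nhds_zero
  have t4 : Tendsto (fun x : ℝ => ‖d‖ * (C * x⁻¹ + |Real.log x / x|)) atTop (nhds 0) := by
    have := ((t1.const_mul C).add t2.abs).const_mul ‖d‖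
    simpa using this
  refine squeeze_zero_norm' ?_ t4
  filter_upwards [Ioi_mem_atTop ρ] with x hx
  have hx0 : 0 < x := hρ.trans hx
  rw [norm_mul, norm_mul, RCLike.norm_conj, Complex.norm_real, Real.norm_of_nonneg hx0.le, hT x hx,
    norm_div, norm_neg, norm_pow, Complex.norm_real, Real.norm_of_nonneg hx0.le, abs_div,
    abs_of_pos hx0]
  calc x * (‖d‖ / x ^ 2) * ‖G.f' x‖ ≤ x * (‖d‖ / x ^ 2) * (C + |Real.log x|) := by
        gcongr
        exact hC x hx0
    _ = _ := by field_simp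

lemma BL.rpos {n : ℕ} {r : ℕ → ℝ} (hpos : 0 < r 1)
    (hmono : ∀ j, 1 ≤ j → j < n → r j < r (j + 1)) :
    ∀ m, 1 ≤ m → m ≤ n → r 1 ≤ r m := by
  intro m hm
  induction m, hm using Nat.le_induction with
  | base => intro _; exact le_rfl
  | succ k hk ih => intro h; exact (ih (by omega)).trans (hmono k hk (by omega)).le

lemma BL.smoothT (S : Lambda0) (hsm : ContDiffOn ℝ 2 S.f (Ioi 0)) :
    ∃ T : ℝ → ℂ, (∀ x, 0 < x → HasDerivAt S.f' (T x) x) ∧ ContinuousOn T (Ioi 0) := by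
  have hd : EqOn (deriv S.f) S.f' (Ioi 0) := fun x hx => (S.hasDeriv x hx).deriv
  have h1 : ContDiffOn ℝ 1 (deriv S.f) (Ioi 0) :=
    ((contDiffOn_succ_iff_deriv_of_isOpen (n := 1) isOpen_Ioi).1 (by simpa [one_add_one_eq_two] using hsm)).2.2
  have h2 : ContDiffOn ℝ 1 S.f' (Ioi 0) := h1.congr fun x hx => (hd hx).symm
  refine ⟨deriv S.f', fun x hx => ?_, h2.continuousOn_deriv_of_isOpen isOpen_Ioi le_rfl⟩
  exact ((h2.differentiableOn one_ne_zero).differentiableAt (Ioi_mem_nhds hx)).hasDerivAt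

lemma BL.orth (n : ℕ) (hn : 2 ≤ n) (r : ℕ → ℝ) (hpos : 0 < r 1)
    (hmono : ∀ j, 1 ≤ j → j < n → r j < r (j + 1))
    (G S : Lambda0) (hS : IsBLSpline n r S.f)
    (hint : ∀ j, 1 ≤ j → j ≤ n → G.f (r j) = 0)
    (hAB : Tendsto G.f (nhdsWithin 0 (Ioi 0)) (nhds 0) ∨ NonSingularBLS (r 1) S.f) :
    ∫ x in Ioi (0 : ℝ), BL.I G S x = 0 := by
  obtain ⟨T, hT, hTc⟩ := BL.smoothT S hS.smooth
  have hI := BL.I_int G S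
  have hle := BL.rpos hpos hmono
  have hrn : 0 < r n := hpos.trans_le (hle n (by omega) le_rfl)
  have hii : ∀ s t : ℝ, 0 ≤ s → s ≤ t → IntervalIntegrable (BL.I G S) volume s t := by
    intro s t hs hst
    rw [intervalIntegrable_iff_integrableOn_Ioc_of_le hst]
    exact hI.mono_set fun x hx => lt_of_le_of_lt hs hx.1
  set Φ : ℝ → ℂ := fun x => (x : ℂ) * (starRingEnd ℂ) (T x) * G.f' x with hΦ
  -- middle
  have hmid : ∀ m, 1 ≤ m → m ≤ n → ∫ x in (r 1)..(r m), BL.I G S x = Φ (r m) - Φ (r 1) := by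
    intro m hm
    induction m, hm using Nat.le_induction with
    | base => intro _; simp
    | succ k hk ih =>
      intro h
      have hk0 : 0 < r k := hpos.trans_le (hle k hk (by omega))
      obtain ⟨a, b, c, d, hf⟩ := hS.pieces k hk h
      have hp := BL.piece G S T hT hTc hk0 (hmono k hk (by omega)) a b c d hf
      rw [hint k hk (by omega), hint (k + 1) (by omega) h] at hp
      rw [← intervalIntegral.integral_add_adjacent_intervals
        (hii _ _ hpos.le (hle k hk (by omega))) (hii _ _ hk0.le (hmono k hk (by omega)).le),
        ih (by omega), hp]
      simp only [hΦ]
      ring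
  -- left
  have hleft : ∫ x in (0 : ℝ)..(r 1), BL.I G S x = Φ (r 1) := by
    obtain ⟨a, b, c, hf, hb⟩ : ∃ a b c : ℂ, (∀ x ∈ Ioo (0 : ℝ) (r 1),
        S.f x = a * (x : ℂ) ^ 2 + b * (x : ℂ) ^ 2 * (Real.log x : ℂ) + c + 0 * (Real.log x : ℂ)) ∧
        Tendsto (fun x => 4 * (starRingEnd ℂ) b * (G.f (r 1) - G.f x)) (nhdsWithin 0 (Ioi 0))
          (nhds 0) := by
      rcases hAB with h | ⟨a, c, h⟩
      · obtain ⟨a, b, c, hf⟩ := hS.left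
        refine ⟨a, b, c, fun x hx => by rw [hf x hx]; ring, ?_⟩
        have := (h.const_sub (G.f (r 1))).const_mul (4 * (starRingEnd ℂ) b)
        rw [hint 1 le_rfl (by omega)] at this ⊢
        simpa using this
      · exact ⟨a, 0, c, fun x hx => by rw [h x hx]; ring, by simp⟩
    have hform := BL.piece_formula S T hT le_rfl a b c 0 hf
    have hlim := BL.lim_left G T hpos a b (fun x hx => by rw [(hform x hx).2]; ring)
    have l1 : Tendsto (fun s => ∫ x in s..(r 1), BL.I G S x) (nhdsWithin 0 (Ioi 0))
        (nhds (Φ (r 1) - 0 - 0)) := by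
      refine ((hlim.const_sub (Φ (r 1))).sub hb).congr' ?_
      filter_upwards [Ioo_mem_nhdsGT hpos] with s hs
      rw [BL.piece G S T hT hTc hs.1 hs.2 a b c 0 (fun x hx => hf x ⟨hs.1.trans hx.1, hx.2⟩)]
    have l2 : Tendsto (fun s => ∫ x in s..(r 1), BL.I G S x) (nhdsWithin 0 (Ioi 0))
        (nhds (∫ x in (0 : ℝ)..(r 1), BL.I G S x)) := by
      have hc := intervalIntegral.continuousOn_primitive_interval_left (a := 0) (b := r 1)
        (μ := volume) (f := BL.I G S) (by
          rw [uIcc_of_le hpos.le]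
          exact (intervalIntegrable_iff_integrableOn_Icc_of_le hpos.le).1 (hii 0 (r 1) le_rfl hpos.le))
      have := hc 0 (by simp)
      rw [uIcc_of_le hpos.le] at this
      refine this.tendsto.mono_left ?_
      rw [← nhdsWithin_Ioo_eq_nhdsGT hpos]
      exact nhdsWithin_mono _ Ioo_subset_Icc_self
    have := tendsto_nhds_unique l2 l1
    simpa using this
  have hright : ∫ x in Ioi (r n), BL.I G S x = - Φ (r n) := by
    obtain ⟨c, d, hf⟩ := hS.right
    have hf' : ∀ x ∈ Ioi (r n), S.f x = 0 * (x : ℂ) ^ 2 + 0 * (x : ℂ) ^ 2 * (Real.log x : ℂ) + c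
      + d * (Real.log x : ℂ) := fun x hx => by rw [hf x hx]; ring
    have hlim := BL.lim_right G T hrn d (fun x hx => by
      have hx : r n < x := hx
      have := (BL.piece_formula S T hT hrn.le 0 0 c d (t := x + 1) (fun y hy => hf' y hy.1) x
        ⟨hx, by linarith⟩).2
      rw [this]; ring)
    have l1 : Tendsto (fun t => ∫ x in (r n)..t, BL.I G S x) atTop (nhds (0 - Φ (r n))) := by
      refine (hlim.sub_const (Φ (r n))).congr' ?_
      filter_upwards [Ioi_mem_atTop (r n)] with t ht
      rw [BL.piece G S T hT hTc hrn ht 0 0 c d (fun x hx => hf' x hx.1)]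
      simp [hΦ]
    have l2 := intervalIntegral_tendsto_integral_Ioi (r n)
      (hI.mono_set (Ioi_subset_Ioi hrn.le)) tendsto_id
    have := tendsto_nhds_unique l2 l1
    simpa using this
  have hsplit : ∫ x in Ioi (0 : ℝ), BL.I G S x = (∫ x in (0 : ℝ)..(r n), BL.I G S x)
      + ∫ x in Ioi (r n), BL.I G S x := by
    rw [intervalIntegral.integral_of_le hrn.le, ← setIntegral_union Ioc_disjoint_Ioi_same
      measurableSet_Ioi (hI.mono_set fun x hx => hx.1) (hI.mono_set (Ioi_subset_Ioi hrn.le)),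
      Ioc_union_Ioi_eq_Ioi hrn.le]
  rw [hsplit, ← intervalIntegral.integral_add_adjacent_intervals
    (hii 0 (r 1) le_rfl hpos.le) (hii _ _ hpos.le (hle n (by omega) le_rfl)), hleft,
    hmid n (by omega) le_rfl, hright]
  ring

lemma BL.cs {a b : ℝ} (hab : a < b) {w : ℝ → ℂ} (h1 : IntervalIntegrable w volume a b)
    (h2 : IntervalIntegrable (fun x => ‖w x‖ ^ 2) volume a b) :
    (∫ x in a..b, ‖w x‖) ^ 2 ≤ (b - a) * ∫ x in a..b, ‖w x‖ ^ 2 := by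
  set M := ∫ x in a..b, ‖w x‖ with hM
  set L := b - a with hL
  have hL0 : 0 < L := by linarith
  have h0 : 0 ≤ ∫ x in a..b, (‖w x‖ - M / L) ^ 2 :=
    intervalIntegral.integral_nonneg hab.le fun x _ => sq_nonneg _
  have e : ∫ x in a..b, (‖w x‖ - M / L) ^ 2 =
      (∫ x in a..b, ‖w x‖ ^ 2) - 2 * (M / L) * M + L * (M / L) ^ 2 := by
    have : ∀ x, (‖w x‖ - M / L) ^ 2 = ‖w x‖ ^ 2 - 2 * (M / L) * ‖w x‖ + (M / L) ^ 2 :=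
      fun x => by ring
    simp only [this]
    rw [intervalIntegral.integral_add (h2.sub (h1.norm.const_mul _)) intervalIntegrable_const,
      intervalIntegral.integral_sub h2 (h1.norm.const_mul _), intervalIntegral.integral_const_mul,
      intervalIntegral.integral_const, smul_eq_mul]
  rw [e] at h0
  have : (∫ x in a..b, ‖w x‖ ^ 2) - 2 * (M / L) * M + L * (M / L) ^ 2
    = (L * (∫ x in a..b, ‖w x‖ ^ 2) - M ^ 2) / L := by field_simp; ring
  rw [this] at h0
  have h5 := mul_nonneg h0 hL0.le
  rw [div_mul_cancel₀ _ hL0.ne'] at h5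
  linarith

lemma BL.sq_ii (G : Lambda0) {a b : ℝ} (ha : 0 < a) (hab : a ≤ b) :
    IntervalIntegrable (fun x => ‖G.f'' x‖ ^ 2) volume a b := by
  have hE := (BL.Eii G ha hab).const_mul (1 / a)
  refine hE.mono_fun' ?_ ?_
  · rw [uIoc_of_le hab]
    exact ((BL.locInt G).mono_measure (Measure.restrict_mono (fun x hx => ha.trans hx.1) le_rfl)).norm.pow 2
  · rw [uIoc_of_le hab]
    filter_upwards [ae_restrict_mem measurableSet_Ioc] with x hx
    have hx0 : 0 < x := ha.trans hx.1
    rw [Real.norm_of_nonneg (by positivity)]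
    unfold BL.E
    have h1 : 0 ≤ 1 / x * ‖G.f' x‖ ^ 2 := by positivity
    rw [one_div, inv_mul_eq_div, le_div_iff₀ ha]
    have := mul_le_mul_of_nonneg_left hx.1.le (sq_nonneg ‖G.f'' x‖)
    linarith

lemma BL.est1 (G : Lambda0) {a b : ℝ} (ha : 0 < a) (hab : a < b) (h : G.f a = G.f b) :
    ∫ x in a..b, ‖G.f' x‖ ^ 2 ≤ (b - a) ^ 2 * ∫ x in a..b, ‖G.f'' x‖ ^ 2 := by
  have hcs := BL.cs hab (BL.ii G ha hab.le) (BL.sq_ii G ha hab.le)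
  have c1 : ContinuousOn G.f' (uIcc a b) := by
    rw [uIcc_of_le hab.le]
    exact G.contDeriv.mono fun x hx => lt_of_lt_of_le ha hx.1
  set M := ∫ x in a..b, ‖G.f'' x‖ with hM
  have hM0 : 0 ≤ M := intervalIntegral.integral_nonneg hab.le fun x _ => norm_nonneg _
  have key0 : ∀ x ∈ Icc a b, ∀ y ∈ Icc a b, x ≤ y → ‖G.f' y - G.f' x‖ ≤ M := by
    intro x hx y hy hxy
    rw [BL.sub_eq G (ha.trans_le hx.1) hxy]
    refine (intervalIntegral.norm_integral_le_integral_norm hxy).trans ?_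
    exact intervalIntegral.integral_mono_interval hx.1 hxy hy.2
      (Eventually.of_forall fun x => norm_nonneg _) (BL.ii G ha hab.le).norm
  have key : ∀ x ∈ Icc a b, ∀ y ∈ Icc a b, ‖G.f' x - G.f' y‖ ≤ M := by
    intro x hx y hy
    rcases le_total x y with hxy | hxy
    · rw [norm_sub_rev]; exact key0 x hx y hy hxy
    · exact key0 y hy x hx hxy
  have hb : ∀ x ∈ Icc a b, ‖G.f' x‖ ≤ M := by
    intro x hx
    have e : ∫ y in a..b, (G.f' x - G.f' y) = (b - a) • G.f' x := by
      rw [intervalIntegral.integral_sub intervalIntegrable_const c1.intervalIntegrable,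
        ← BL.sub_eq0 G ha hab.le, h, intervalIntegral.integral_const]
      simp
    have hn := intervalIntegral.norm_integral_le_of_norm_le_const (a := a) (b := b)
      (f := fun y => G.f' x - G.f' y) (C := M) (fun y hy => key x hx y (by
        rw [uIoc_of_le hab.le] at hy; exact Ioc_subset_Icc_self hy))
    rw [e, norm_smul, Real.norm_eq_abs, abs_of_pos (by linarith : 0 < b - a), mul_comm] at hn
    exact le_of_mul_le_mul_right hn (by linarith)
  calc ∫ x in a..b, ‖G.f' x‖ ^ 2 ≤ ∫ x in a..b, M ^ 2 := by
        apply intervalIntegral.integral_mono_on hab.le (c1.norm.pow 2).intervalIntegrable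
          intervalIntegrable_const
        intro x hx
        exact pow_le_pow_left₀ (norm_nonneg _) (hb x hx) 2
    _ = (b - a) * M ^ 2 := by rw [intervalIntegral.integral_const, smul_eq_mul]
    _ ≤ (b - a) * ((b - a) * ∫ x in a..b, ‖G.f'' x‖ ^ 2) :=
        mul_le_mul_of_nonneg_left hcs (by linarith)
    _ = _ := by ring

lemma BL.contf (G : Lambda0) : ContinuousOn G.f (Ioi 0) :=
  fun x hx => (G.hasDeriv x hx).continuousAt.continuousWithinAt

lemma BL.est0 (G : Lambda0) {a b : ℝ} (ha : 0 < a) (hab : a < b) (h : G.f a = 0)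
    (h' : G.f b = 0) :
    ∫ x in a..b, ‖G.f x‖ ^ 2 ≤ ((b - a) / 2) ^ 2 * ∫ x in a..b, ‖G.f' x‖ ^ 2 := by
  have c0 : ContinuousOn G.f (uIcc a b) := by
    rw [uIcc_of_le hab.le]
    exact (BL.contf G).mono fun x hx => lt_of_lt_of_le ha hx.1
  have c1 : ContinuousOn G.f' (uIcc a b) := by
    rw [uIcc_of_le hab.le]
    exact G.contDeriv.mono fun x hx => lt_of_lt_of_le ha hx.1
  have hcs := BL.cs hab c1.intervalIntegrable (c1.norm.pow 2).intervalIntegrable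
  set M := ∫ x in a..b, ‖G.f' x‖ with hM
  have hb : ∀ x ∈ Icc a b, ‖G.f x‖ ≤ M / 2 := by
    intro x hx
    have hx0 := ha.trans_le hx.1
    have e1 := BL.sub_eq0 G ha hx.1
    have e2 := BL.sub_eq0 G hx0 hx.2
    rw [h, sub_zero] at e1
    rw [h', zero_sub] at e2
    have n1 := intervalIntegral.norm_integral_le_integral_norm (f := G.f') (μ := volume) hx.1
    have n2 := intervalIntegral.norm_integral_le_integral_norm (f := G.f') (μ := volume) hx.2
    rw [← e1] at n1
    rw [← e2, norm_neg] at n2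
    have hs := intervalIntegral.integral_add_adjacent_intervals (μ := volume)
      (f := fun x => ‖G.f' x‖) (a := a) (b := x) (c := b)
      ((c1.mono (by rw [uIcc_of_le hx.1, uIcc_of_le hab.le]; exact Icc_subset_Icc_right hx.2)).norm.intervalIntegrable)
      ((c1.mono (by rw [uIcc_of_le hx.2, uIcc_of_le hab.le]; exact Icc_subset_Icc_left hx.1)).norm.intervalIntegrable)
    linarith
  calc ∫ x in a..b, ‖G.f x‖ ^ 2 ≤ ∫ x in a..b, (M / 2) ^ 2 := by
        apply intervalIntegral.integral_mono_on hab.le (c0.norm.pow 2).intervalIntegrable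
          intervalIntegrable_const
        intro x hx
        exact pow_le_pow_left₀ (norm_nonneg _) (hb x hx) 2
    _ = (b - a) / 4 * M ^ 2 := by rw [intervalIntegral.integral_const, smul_eq_mul]; ring
    _ ≤ (b - a) / 4 * ((b - a) * ∫ x in a..b, ‖G.f' x‖ ^ 2) :=
        mul_le_mul_of_nonneg_left hcs (by linarith)
    _ = _ := by ring

lemma BL.sum_le {n : ℕ} {r : ℕ → ℝ} (hpos : 0 < r 1)
    (hmono : ∀ j, 1 ≤ j → j < n → r j < r (j + 1)) (u v : ℝ → ℝ) (K : ℝ)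
    (hu : ∀ s t, 0 < s → s ≤ t → IntervalIntegrable u volume s t)
    (hv : ∀ s t, 0 < s → s ≤ t → IntervalIntegrable v volume s t)
    (hj : ∀ j, 1 ≤ j → j < n → ∫ x in (r j)..(r (j + 1)), u x ≤ K * ∫ x in (r j)..(r (j + 1)), v x) :
    ∀ m, 1 ≤ m → m ≤ n → ∫ x in (r 1)..(r m), u x ≤ K * ∫ x in (r 1)..(r m), v x := by
  have hle := BL.rpos hpos hmono
  intro m hm
  induction m, hm using Nat.le_induction with
  | base => intro _; simp
  | succ k hk ih =>
    intro h
    have h1 := hle k hk (by omega)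
    have h2 := (hmono k hk (by omega)).le
    have h3 := hpos.trans_le h1
    rw [← intervalIntegral.integral_add_adjacent_intervals (hu _ _ hpos h1) (hu _ _ h3 h2),
      ← intervalIntegral.integral_add_adjacent_intervals (hv _ _ hpos h1) (hv _ _ h3 h2), mul_add]
    exact add_le_add (ih (by omega)) (hj k hk (by omega))

/-- `L²` error bound: for `l ∈ {0,1}`,
`‖f^{(l)} − σ^{(l)}‖_{L²[r₁,r_n]} ≤ (1/(2^{1−l}·√r₁))·h^{2−l}·‖f‖₀`. -/
theorem stmt12 (n : ℕ) (hn : 2 ≤ n) (r : ℕ → ℝ) (hpos : 0 < r 1)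
    (hmono : ∀ j, 1 ≤ j → j < n → r j < r (j + 1))
    (h : ℝ) (hh : IsGreatest {d : ℝ | ∃ j, 1 ≤ j ∧ j < n ∧ d = r (j + 1) - r j} h)
    (F S : Lambda0) (hS : IsBLSpline n r S.f)
    (hint : ∀ j, 1 ≤ j → j ≤ n → S.f (r j) = F.f (r j))
    (hAB : Filter.Tendsto F.f (nhdsWithin 0 (Set.Ioi 0)) (nhds (S.f 0)) ∨
      NonSingularBLS (r 1) S.f) :
    Real.sqrt (∫ x in Set.Icc (r 1) (r n), ‖F.f x - S.f x‖ ^ 2) ≤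
        1 / (2 * Real.sqrt (r 1)) * h ^ 2 * F.seminorm0 ∧
    Real.sqrt (∫ x in Set.Icc (r 1) (r n), ‖F.f' x - S.f' x‖ ^ 2) ≤
        1 / Real.sqrt (r 1) * h * F.seminorm0 := by
  set G := BL.sub F S with hG
  have hGz : ∀ j, 1 ≤ j → j ≤ n → G.f (r j) = 0 := by
    intro j h1 h2
    simp [hG, BL.sub, hint j h1 h2]
  have hle := BL.rpos hpos hmono
  have h1n := hle n (by omega) le_rfl
  have hEn := BL.energy_le F S (BL.orth n hn r hpos hmono G S hS hGz (by
    rcases hAB with h | h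
    · left
      have hc : Tendsto S.f (nhdsWithin 0 (Ioi 0)) (nhds (S.f 0)) :=
        hS.cont0.tendsto.mono_left (nhdsWithin_mono _ Ioi_subset_Ici_self)
      simpa [hG, BL.sub] using h.sub hc
    · exact Or.inr h))
  have hub : ∀ j, 1 ≤ j → j < n → r (j + 1) - r j ≤ h := fun j h1 h2 => hh.2 ⟨j, h1, h2, rfl⟩
  have hh0 : 0 ≤ h := by
    obtain ⟨j, h1, h2, h3⟩ := hh.1
    rw [h3]; linarith [hmono j h1 h2]
  have i0 : ∀ s t, 0 < s → s ≤ t → IntervalIntegrable (fun x => ‖G.f x‖ ^ 2) volume s t := by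
    intro s t hs hst
    apply ContinuousOn.intervalIntegrable
    rw [uIcc_of_le hst]
    exact ((BL.contf G).mono fun x hx => lt_of_lt_of_le hs hx.1).norm.pow 2
  have i1 : ∀ s t, 0 < s → s ≤ t → IntervalIntegrable (fun x => ‖G.f' x‖ ^ 2) volume s t := by
    intro s t hs hst
    apply ContinuousOn.intervalIntegrable
    rw [uIcc_of_le hst]
    exact (G.contDeriv.mono fun x hx => lt_of_lt_of_le hs hx.1).norm.pow 2
  have i2 : ∀ s t, 0 < s → s ≤ t → IntervalIntegrable (fun x => ‖G.f'' x‖ ^ 2) volume s t :=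
    fun s t hs hst => BL.sq_ii G hs hst
  have A1 := BL.sum_le hpos hmono _ _ (h ^ 2) i1 i2 (by
    intro j h1 h2
    have hj := hmono j h1 h2
    refine (BL.est1 G (hpos.trans_le (hle j h1 h2.le)) hj
      (by rw [hGz j h1 h2.le, hGz (j + 1) (by omega) h2])).trans ?_
    refine mul_le_mul_of_nonneg_right (pow_le_pow_left₀ (by linarith) (hub j h1 h2) 2) ?_
    exact intervalIntegral.integral_nonneg hj.le fun x _ => by positivity) n (by omega) le_rfl
  have A0 := BL.sum_le hpos hmono _ _ ((h / 2) ^ 2) i0 i1 (by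
    intro j h1 h2
    have hj := hmono j h1 h2
    refine (BL.est0 G (hpos.trans_le (hle j h1 h2.le)) hj
      (hGz j h1 h2.le) (hGz (j + 1) (by omega) h2)).trans ?_
    refine mul_le_mul_of_nonneg_right (pow_le_pow_left₀ (by linarith [hub j h1 h2])
      (by linarith [hub j h1 h2]) 2) ?_
    exact intervalIntegral.integral_nonneg hj.le fun x _ => by positivity) n (by omega) le_rfl
  have A2 : ∫ x in (r 1)..(r n), ‖G.f'' x‖ ^ 2 ≤ 1 / r 1 * energySq F.f' F.f'' := by
    calc ∫ x in (r 1)..(r n), ‖G.f'' x‖ ^ 2 ≤ ∫ x in (r 1)..(r n), 1 / r 1 * BL.E G x := by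
          apply intervalIntegral.integral_mono_on h1n (i2 _ _ hpos h1n)
            ((BL.Eii G hpos h1n).const_mul _)
          intro x hx
          have hx0 := hpos.trans_le hx.1
          unfold BL.E
          have h1 : 0 ≤ 1 / x * ‖G.f' x‖ ^ 2 := by positivity
          rw [one_div, inv_mul_eq_div, le_div_iff₀ hpos]
          have := mul_le_mul_of_nonneg_left hx.1 (sq_nonneg ‖G.f'' x‖)
          linarith
      _ = 1 / r 1 * ∫ x in (r 1)..(r n), BL.E G x := intervalIntegral.integral_const_mul _ _
      _ ≤ _ := mul_le_mul_of_nonneg_left ((BL.Eint_le G hpos h1n).trans hEn) (by positivity)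
  have hE0 : 0 ≤ energySq F.f' F.f'' :=
    setIntegral_nonneg measurableSet_Ioi fun x hx => BL.E_nonneg F hx
  have hsq : (F.seminorm0) ^ 2 = energySq F.f' F.f'' := Real.sq_sqrt hE0
  have hsn : 0 ≤ F.seminorm0 := Real.sqrt_nonneg _
  have hr : Real.sqrt (r 1) ^ 2 = r 1 := Real.sq_sqrt hpos.le
  have hr0 : 0 < Real.sqrt (r 1) := Real.sqrt_pos.2 hpos
  have B1 : ∫ x in (r 1)..(r n), ‖G.f' x‖ ^ 2 ≤ h ^ 2 * (1 / r 1 * energySq F.f' F.f'') :=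
    A1.trans (mul_le_mul_of_nonneg_left A2 (sq_nonneg h))
  have B0 : ∫ x in (r 1)..(r n), ‖G.f x‖ ^ 2
      ≤ (h / 2) ^ 2 * (h ^ 2 * (1 / r 1 * energySq F.f' F.f'')) :=
    A0.trans (mul_le_mul_of_nonneg_left B1 (sq_nonneg _))
  rw [intervalIntegral.integral_of_le h1n, ← integral_Icc_eq_integral_Ioc] at B0 B1
  constructor
  · apply Real.sqrt_le_iff.2 ⟨by positivity, ?_⟩
    refine B0.trans (le_of_eq ?_)
    rw [mul_pow, mul_pow, div_pow 1, mul_pow 2, hr, hsq]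
    field_simp
  · apply Real.sqrt_le_iff.2 ⟨by positivity, ?_⟩
    refine B1.trans (le_of_eq ?_)
    rw [mul_pow, mul_pow, div_pow, hr, hsq]
    field_simp
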